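/- Let G be a connected, simple graph with maximum degree at most 3 and nonnegative Ricci curvature, and let P = v_0 v_1 ⋯ v_l be a geodesic path and i an index with 0 ≤ i ≤ l − 3. (1) If deg(v_{i+1}) = 2 and v_{i+2} has a neighbor u ∉ {v_{i+1}, v_{i+3}}, then d(v_i, u) ≤ 2. (2) Symmetrically, if deg(v_{i+2}) = 2 and v_{i+1} has a neighbor u ∉ {v_i, v_{i+2}}, then d(u, v_{i+3}) ≤ 2. -/

import Mathlib

open SimpleGraph

variable {V : Type*}

/-- Combinatorial (unnormalized) graph Laplacian. -/
def lapl (G : SimpleGraph V) [G.LocallyFinite] (f : V → ℝ) (x : V) : ℝ :=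
  ∑ y ∈ G.neighborFinset x, (f y - f x)

/-- Lin-Lu-Yau-Ollivier Ricci curvature (limit-free definition):
`κ(u,v) = inf { Δf(u) − Δf(v) : f 1-Lipschitz w.r.t. graph distance, f v − f u = 1 }`. -/
noncomputable def ricci (G : SimpleGraph V) [G.LocallyFinite] (u v : V) : ℝ :=
  sInf { r : ℝ | ∃ f : V → ℝ,
    (∀ x y : V, |f x - f y| ≤ (G.dist x y : ℝ)) ∧ f v - f u = 1 ∧
    r = lapl G f u - lapl G f v }

/-- Nonnegative Ricci curvature on every edge. -/
def NonnegRicci (G : SimpleGraph V) [G.LocallyFinite] : Prop :=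
  ∀ u v : V, G.Adj u v → 0 ≤ ricci G u v

/-!
The test functions defining the curvature of an edge `bc` include every 1-Lipschitz `f` with
`f c = f b + 1`, so nonnegative curvature makes the Laplacian of such an `f` satisfy
`Δf(c) ≤ Δf(b)`. If `f` climbs by one at each step of `a, b, c, e` and `a`, `c` are the only
neighbors of `b`, then `Δf(b) = 0`; if `b`, `e`, `u` are the neighbors of `c`, the contributions
of `b` and `e` to `Δf(c)` cancel and `Δf(c) = f u - f c`. Hence `f u ≤ f c`, and the distance
from `a` is such a function `f`.
-/

section Walks

variable {G : SimpleGraph V} {v : ℕ → V}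

theorem exists_walk_length_eq_of_adj_succ {n : ℕ} (hadj : ∀ k < n, G.Adj (v k) (v (k + 1))) :
    ∃ p : G.Walk (v 0) (v n), p.length = n := by
  induction n with
  | zero => exact ⟨.nil, rfl⟩
  | succ n ih =>
    obtain ⟨p, hp⟩ := ih fun k hk => hadj k (by lia)
    exact ⟨p.concat (hadj n (by lia)), by rw [Walk.length_concat, hp]⟩

theorem dist_add_right_eq_of_geodesic {l m n : ℕ} (hadj : ∀ k < l, G.Adj (v k) (v (k + 1)))
    (hgeo : G.dist (v 0) (v l) = l) (hmn : m + n ≤ l) : G.dist (v m) (v (m + n)) = n := by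
  obtain ⟨r, rfl⟩ := Nat.exists_eq_add_of_le hmn
  obtain ⟨p, hp⟩ := exists_walk_length_eq_of_adj_succ fun k (hk : k < m) => hadj k (by lia)
  obtain ⟨q, hq⟩ := exists_walk_length_eq_of_adj_succ (v := fun k => v (m + k))
    fun k (hk : k < n) => hadj (m + k) (by lia)
  obtain ⟨s, hs⟩ := exists_walk_length_eq_of_adj_succ (v := fun k => v (m + n + k))
    fun k (hk : k < r) => hadj (m + n + k) (by lia)
  have hlength : ((p.append q).append s).length = G.dist (v 0) (v (m + n + r)) := by
    rw [Walk.length_append, Walk.length_append, hp, hq, hs, hgeo]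
  exact (length_eq_dist_of_subwalk hlength ⟨p, s, rfl⟩).symm.trans hq

end Walks

/-- The 1-Lipschitz functions for the graph distance, the test functions in `ricci`. If `G` is
disconnected, they are constrained across components too, because `G.dist` is `0` there. -/
def IsOneLipschitz (G : SimpleGraph V) (f : V → ℝ) : Prop :=
  ∀ x y : V, |f x - f y| ≤ (G.dist x y : ℝ)

namespace IsOneLipschitz

variable {G : SimpleGraph V} {f : V → ℝ}

theorem neg (hf : IsOneLipschitz G f) : IsOneLipschitz G (-f) := fun x y => by
  simpa only [Pi.neg_apply, neg_sub_neg, abs_sub_comm] using hf x y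

theorem abs_sub_le_one (hf : IsOneLipschitz G f) {x y : V} (hxy : G.Adj x y) :
    |f y - f x| ≤ 1 := by
  simpa [dist_eq_one_iff_adj.2 hxy.symm] using hf y x

theorem le_add_one (hf : IsOneLipschitz G f) {x y : V} (hxy : G.Adj x y) : f y ≤ f x + 1 := by
  linarith [le_of_abs_le (hf.abs_sub_le_one hxy)]

end IsOneLipschitz

theorem isOneLipschitz_dist {G : SimpleGraph V} (hconn : G.Connected) (a : V) :
    IsOneLipschitz G fun x => (G.dist a x : ℝ) := fun x y => by
  have hx : (G.dist a x : ℝ) ≤ G.dist a y + G.dist y x := mod_cast hconn.dist_triangle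
  have hy : (G.dist a y : ℝ) ≤ G.dist a x + G.dist x y := mod_cast hconn.dist_triangle
  rw [dist_comm (u := y)] at hx
  exact abs_sub_le_iff.2 ⟨by linarith, by linarith⟩

section Curvature

variable {G : SimpleGraph V} [G.LocallyFinite] {f : V → ℝ}

theorem lapl_neg (x : V) : lapl G (-f) x = -lapl G f x := by
  simp only [lapl, Pi.neg_apply, ← Finset.sum_neg_distrib, neg_sub, neg_sub_neg]

theorem lapl_eq_sum_of_degree_le_card {x : V} {s : Finset V} (hs : s ⊆ G.neighborFinset x)
    (hcard : G.degree x ≤ s.card) : lapl G f x = ∑ y ∈ s, (f y - f x) := by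
  rw [lapl, Finset.eq_of_subset_of_card_le hs hcard]

theorem lapl_eq_of_degree_le_two {x a b : V} (hx : G.degree x ≤ 2) (ha : G.Adj x a)
    (hb : G.Adj x b) (hab : a ≠ b) : lapl G f x = (f a - f x) + (f b - f x) := by
  classical
  rw [lapl_eq_sum_of_degree_le_card (s := {a, b}) (by simp [Finset.insert_subset_iff, ha, hb])
    (by rwa [Finset.card_pair hab]), Finset.sum_pair hab]

theorem lapl_eq_of_degree_le_three {x a b c : V} (hx : G.degree x ≤ 3) (ha : G.Adj x a)
    (hb : G.Adj x b) (hc : G.Adj x c) (hab : a ≠ b) (hac : a ≠ c) (hbc : b ≠ c) :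
    lapl G f x = (f a - f x) + ((f b - f x) + (f c - f x)) := by
  classical
  rw [lapl_eq_sum_of_degree_le_card (s := {a, b, c})
    (by simp [Finset.insert_subset_iff, ha, hb, hc])
    (by rwa [Finset.card_eq_three.2 ⟨a, b, c, hab, hac, hbc, rfl⟩]),
    Finset.sum_insert (by simp [hab, hac]), Finset.sum_pair hbc]

theorem IsOneLipschitz.abs_lapl_le_degree (hf : IsOneLipschitz G f) (x : V) :
    |lapl G f x| ≤ G.degree x :=
  calc |lapl G f x| ≤ ∑ y ∈ G.neighborFinset x, |f y - f x| := Finset.abs_sum_le_sum_abs _ _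
    _ ≤ ∑ _y ∈ G.neighborFinset x, (1 : ℝ) := Finset.sum_le_sum fun y hy =>
        hf.abs_sub_le_one ((G.mem_neighborFinset x y).1 hy)
    _ = G.degree x := by simp

theorem IsOneLipschitz.ricci_le (hf : IsOneLipschitz G f) {b c : V} (hbc : f c - f b = 1) :
    ricci G b c ≤ lapl G f b - lapl G f c := by
  refine csInf_le ⟨-(G.degree b + G.degree c), ?_⟩ ⟨f, hf, hbc, rfl⟩
  rintro r ⟨g, hg : IsOneLipschitz G g, -, rfl⟩
  linarith [neg_le_of_abs_le (hg.abs_lapl_le_degree b), le_of_abs_le (hg.abs_lapl_le_degree c)]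

variable (G) in
theorem ricci_comm (b c : V) : ricci G b c = ricci G c b := by
  refine congrArg sInf (Set.Subset.antisymm ?_ ?_) <;>
  · rintro r ⟨f, hf : IsOneLipschitz G f, hbc, rfl⟩
    refine ⟨-f, hf.neg, ?_, ?_⟩
    · rwa [Pi.neg_apply, Pi.neg_apply, neg_sub_neg]
    · rw [lapl_neg, lapl_neg, neg_sub_neg]

theorem IsOneLipschitz.le_add_two_of_ricci_nonneg (hf : IsOneLipschitz G f) {a b c e u : V}
    (hab : G.Adj a b) (hbc : G.Adj b c) (hce : G.Adj c e) (hae : f e = f a + 3)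
    (hric : 0 ≤ ricci G b c) (hb : G.degree b ≤ 2) (hc : G.degree c ≤ 3)
    (hcu : G.Adj c u) (hub : u ≠ b) (hue : u ≠ e) : f u ≤ f a + 2 := by
  have hfb_le := hf.le_add_one hab
  have hfc_le := hf.le_add_one hbc
  have hfe_le := hf.le_add_one hce
  have hfb : f b = f a + 1 := by linarith
  have hfc : f c = f a + 2 := by linarith
  have hac_ne : a ≠ c := by rintro rfl; linarith
  have hbe_ne : b ≠ e := by rintro rfl; linarith
  have hlapl_b : lapl G f b = 0 := by
    rw [lapl_eq_of_degree_le_two hb hab.symm hbc hac_ne, hfb, hfc]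
    ring
  have hlapl_c : lapl G f c = f u - f c := by
    rw [lapl_eq_of_degree_le_three hc hbc.symm hce hcu hbe_ne hub.symm hue.symm, hfb, hfc, hae]
    ring
  linarith [hf.ricci_le (b := b) (c := c) (by linarith)]

theorem extra_neighbor_close_general (hconn : G.Connected) {a b c e : V}
    (hab : G.Adj a b) (hbc : G.Adj b c) (hce : G.Adj c e) (hae : G.dist a e = 3)
    (hric : 0 ≤ ricci G b c) :
    (G.degree b ≤ 2 → G.degree c ≤ 3 →
        ∀ u : V, G.Adj c u → u ≠ b → u ≠ e → G.dist a u ≤ 2) ∧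
      (G.degree c ≤ 2 → G.degree b ≤ 3 →
        ∀ u : V, G.Adj b u → u ≠ a → u ≠ c → G.dist u e ≤ 2) := by
  refine ⟨fun hb hc u hcu hub hue => ?_, fun hc hb u hbu hua huc => ?_⟩
  · have hle := (isOneLipschitz_dist hconn a).le_add_two_of_ricci_nonneg hab hbc hce
      (by simp [hae]) hric hb hc hcu hub hue
    simpa using hle
  · have hle := (isOneLipschitz_dist hconn e).le_add_two_of_ricci_nonneg hce.symm hbc.symm
      hab.symm (by simp [dist_comm, hae]) (ricci_comm G b c ▸ hric) hc hb hbu huc hua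
    rw [dist_comm]
    simpa using hle

end Curvature

/-- Let `P = v 0, …, v l` be a geodesic path in a connected simple graph
with maximum degree at most 3 and nonnegative Ricci curvature, and let `0 ≤ i ≤ l − 3`.
(1) If `deg (v (i+1)) = 2` and `u` is a neighbor of `v (i+2)` other than `v (i+1)` and
`v (i+3)`, then `d(v i, u) ≤ 2`. (2) Symmetrically, if `deg (v (i+2)) = 2` and `u` is a
neighbor of `v (i+1)` other than `v i` and `v (i+2)`, then `d(u, v (i+3)) ≤ 2`. -/
theorem extra_neighbor_close (G : SimpleGraph V) [G.LocallyFinite]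
    (hconn : G.Connected) (hdeg : ∀ x : V, G.degree x ≤ 3) (hric : NonnegRicci G)
    (l : ℕ) (v : ℕ → V)
    (hadj : ∀ k < l, G.Adj (v k) (v (k + 1)))
    (hinj : ∀ k ≤ l, ∀ m ≤ l, v k = v m → k = m)
    (hgeo : G.dist (v 0) (v l) = l)
    (i : ℕ) (hi : i + 3 ≤ l) :
    ((G.degree (v (i + 1)) = 2 →
        ∀ u : V, G.Adj (v (i + 2)) u → u ≠ v (i + 1) → u ≠ v (i + 3) →
          G.dist (v i) u ≤ 2) ∧
      (G.degree (v (i + 2)) = 2 →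
        ∀ u : V, G.Adj (v (i + 1)) u → u ≠ v i → u ≠ v (i + 2) →
          G.dist u (v (i + 3)) ≤ 2)) := by
  obtain ⟨hleft, hright⟩ := extra_neighbor_close_general hconn (hadj i (by lia))
    (hadj (i + 1) (by lia)) (hadj (i + 2) (by lia)) (dist_add_right_eq_of_geodesic hadj hgeo hi)
    (hric _ _ (hadj (i + 1) (by lia)))
  exact ⟨fun hb => hleft hb.le (hdeg _), fun hc => hright hc.le (hdeg _)⟩
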